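/- For α ≥ 1/2, λ ≥ 0 and every n ≥ 0, the monic Gegenbauer–Sobolev polynomial satisfies Q_{n,λ}^{(α)}(1) > 0. -/

import Mathlib

open Polynomial MeasureTheory Real Set

/-- The Gegenbauer inner product `∫ f g (1-x²)^{α-1/2}` on `(-1,1)`. -/
noncomputable def gegInner (α : ℝ) (f g : Polynomial ℝ) : ℝ :=
  ∫ x in Set.Ioo (-1 : ℝ) 1, f.eval x * g.eval x * (1 - x ^ 2) ^ (α - 1/2)

/-- `C` is the monic Gegenbauer polynomial of degree `n` for parameter `α`. -/
def IsMonicGegenbauer (α : ℝ) (n : ℕ) (C : Polynomial ℝ) : Prop :=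
  C.Monic ∧ C.natDegree = n ∧
    ∀ p : Polynomial ℝ, p.degree < (n : ℕ) → gegInner α C p = 0

/-- The Gegenbauer–Sobolev inner product. -/
noncomputable def sobInner (α lam : ℝ) (f g : Polynomial ℝ) : ℝ :=
  gegInner α f g + lam * gegInner α (derivative f) (derivative g)

/-- `Q` is the monic Gegenbauer–Sobolev polynomial of degree `n`. -/
def IsMonicGegSobolev (α lam : ℝ) (n : ℕ) (Q : Polynomial ℝ) : Prop :=
  Q.Monic ∧ Q.natDegree = n ∧
    ∀ p : Polynomial ℝ, p.degree < (n : ℕ) → sobInner α lam Q p = 0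

/-! Let `P` be the Gegenbauer polynomial of degree `n + 1`. Since `P` is an eigenfunction of the
Gegenbauer operator, `U = (2α - 1) x P - (1 - x²) P'` is an antiderivative of a multiple of `P`.
Hence the derivative part of the Sobolev product of `U` with a polynomial of degree at most `n`
vanishes, and integration by parts turns the rest into a negative multiple of the coefficient of
`xⁿ`. By parity and a comparison of leading coefficients, `(n + 2α) Q_{n+2} - U` has degree at
most `n`; being orthogonal to all lower degrees it equals `b Q_n`, and pairing it with `Q_n` gives
`b > 0`. At the endpoint `U(1) = (2α - 1) P(1)`, which is nonnegative because all real zeros of `P`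
are less than `1`: were `y ≥ 1` a zero, then `P / (x - y)` would have negative inner product
with `P`. -/

section MonicOrthogonal

variable {K : Type*} [Field K] {B : LinearMap.BilinForm K K[X]} {n : ℕ} {p Q : K[X]}

/-- `Q` is the monic orthogonal polynomial of degree `n` for the bilinear form `B`. The degree
condition on test polynomials has the shape used in `IsMonicGegenbauer` and `IsMonicGegSobolev`,
which are instances of this predicate by definition. -/
def IsMonicOrthogonal (B : LinearMap.BilinForm K K[X]) (n : ℕ) (Q : K[X]) : Prop :=
  Q.Monic ∧ Q.natDegree = n ∧ ∀ p : K[X], p.degree < (n : ℕ) → B Q p = 0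

namespace IsMonicOrthogonal

theorem monic (hQ : IsMonicOrthogonal B n Q) : Q.Monic := hQ.1

theorem natDegree_eq (hQ : IsMonicOrthogonal B n Q) : Q.natDegree = n := hQ.2.1

theorem apply_eq_zero (hQ : IsMonicOrthogonal B n Q) (hp : p.degree < n) : B Q p = 0 :=
  hQ.2.2 p hp

theorem coeff_self (hQ : IsMonicOrthogonal B n Q) : Q.coeff n = 1 :=
  hQ.natDegree_eq ▸ hQ.monic.coeff_natDegree

theorem degree_lt_succ (hQ : IsMonicOrthogonal B n Q) : Q.degree < (n + 1 : ℕ) := by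
  rw [degree_eq_natDegree hQ.monic.ne_zero, hQ.natDegree_eq]
  exact_mod_cast n.lt_succ_self

theorem degree_sub_coeff_smul_lt (hQ : IsMonicOrthogonal B n Q) (hp : p.degree < (n + 1 : ℕ)) :
    (p - p.coeff n • Q).degree < n := by
  have hQ' := hQ.degree_lt_succ
  rw [degree_lt_iff_coeff_zero] at hp hQ' ⊢
  intro i hi
  rcases hi.eq_or_lt with rfl | hi
  · simp [hQ.coeff_self]
  · simp [hp i hi, hQ' i hi]

theorem apply_eq_coeff_mul (hQ : IsMonicOrthogonal B n Q) (hp : p.degree < (n + 1 : ℕ)) :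
    B Q p = p.coeff n * B Q Q := by
  simpa [sub_eq_zero] using hQ.apply_eq_zero (hQ.degree_sub_coeff_smul_lt hp)

theorem eq_coeff_smul (hB : ∀ q, B q q = 0 → q = 0) (hQ : IsMonicOrthogonal B n Q)
    (hp : p.degree < (n + 1 : ℕ)) (hpB : ∀ q : K[X], q.degree < n → B p q = 0) :
    p = p.coeff n • Q := by
  have hlt := hQ.degree_sub_coeff_smul_lt hp
  refine sub_eq_zero.1 (hB _ ?_)
  simp only [LinearMap.BilinForm.sub_left, LinearMap.BilinForm.smul_left, hpB _ hlt,
    hQ.apply_eq_zero hlt, mul_zero, sub_zero]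

theorem comp_neg_X_eq (hB : ∀ q, B q q = 0 → q = 0)
    (hBX : ∀ p q : K[X], B (p.comp (-X)) (q.comp (-X)) = B p q) (hQ : IsMonicOrthogonal B n Q) :
    Q.comp (-X) = (-1 : K) ^ n • Q := by
  have hcoeff : (Q.comp (-X)).coeff n = (-1) ^ n := by
    simpa [hQ.coeff_self] using comp_C_mul_X_coeff (p := Q) (r := -1) (n := n)
  rw [← hcoeff]
  refine hQ.eq_coeff_smul hB (by simpa using hQ.degree_lt_succ) fun q hq => ?_
  rw [← hBX, comp_neg_X_comp_neg_X]
  exact hQ.apply_eq_zero (by simpa using hq)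

theorem coeff_eq_zero [NeZero (2 : K)] (hB : ∀ q, B q q = 0 → q = 0)
    (hBX : ∀ p q : K[X], B (p.comp (-X)) (q.comp (-X)) = B p q)
    (hQ : IsMonicOrthogonal B (n + 1) Q) : Q.coeff n = 0 := by
  have hcoeff : (Q.comp (-X)).coeff n = Q.coeff n * (-1) ^ n := by
    simpa using comp_C_mul_X_coeff (p := Q) (r := -1) (n := n)
  rw [hQ.comp_neg_X_eq hB hBX, coeff_smul, smul_eq_mul] at hcoeff
  have hsign : (2 * (-1) ^ n) * Q.coeff n = 0 := by linear_combination -hcoeff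
  exact (mul_eq_zero.1 hsign).resolve_left (by simp [two_ne_zero])

end IsMonicOrthogonal

theorem exists_isMonicOrthogonal (hB : ∀ q, B q q = 0 → q = 0) (n : ℕ) :
    ∃ Q, IsMonicOrthogonal B n Q := by
  have hnondeg : (B.restrict (degreeLT K n)).Nondegenerate :=
    ⟨fun p hp => Subtype.ext (hB p (hp p)), fun p hp => Subtype.ext (hB p (hp p))⟩
  obtain ⟨⟨r, hr⟩, hrB⟩ := (LinearMap.BilinForm.toDual _ hnondeg).surjective
    ((B (X ^ n)).domRestrict (degreeLT K n))
  have hrdeg : r.degree < n := mem_degreeLT.1 hr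
  have hmonic : (X ^ n - r).Monic := monic_X_pow_sub hrdeg
  have hdeg : (X ^ n - r).natDegree = n := natDegree_eq_of_degree_eq_some <| by
    rw [degree_sub_eq_left_of_degree_lt (by simpa using hrdeg), degree_X_pow]
  refine ⟨X ^ n - r, hmonic, hdeg, fun p hp => ?_⟩
  have hrp : B r p = B (X ^ n) p := LinearMap.congr_fun hrB ⟨p, mem_degreeLT.2 hp⟩
  rw [LinearMap.BilinForm.sub_left, hrp, sub_self]

end MonicOrthogonal

section DegreeBounds

variable {R : Type*} [CommRing R] {p : R[X]} {n : ℕ}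

theorem degree_derivative_lt_of_degree_lt_succ (hp : p.degree < (n + 1 : ℕ)) :
    (derivative p).degree < n := by
  rw [degree_lt_iff_coeff_zero] at hp ⊢
  intro i hi
  rw [coeff_derivative, hp (i + 1) (by omega), zero_mul]

theorem degree_lt_succ_of_degree_derivative_lt [NoZeroDivisors R] [CharZero R]
    (hp : (derivative p).degree < n) : p.degree < (n + 1 : ℕ) := by
  rw [degree_lt_iff_coeff_zero] at hp ⊢
  rintro (_ | i) hi
  · omega
  · have hi' := hp i (by omega)
    rw [coeff_derivative] at hi'
    exact (mul_eq_zero.1 hi').resolve_right (by exact_mod_cast i.succ_ne_zero)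

theorem degree_derivative_one_sub_sq_mul_lt (hp : p.degree < (n : ℕ)) :
    (derivative ((1 - X ^ 2) * p)).degree < (n + 1 : ℕ) := by
  refine degree_derivative_lt_of_degree_lt_succ ?_
  rw [degree_lt_iff_coeff_zero] at hp ⊢
  intro i hi
  obtain ⟨j, rfl⟩ := Nat.exists_eq_add_of_le' (show 2 ≤ i by omega)
  rw [sub_mul, one_mul, coeff_sub, coeff_X_pow_mul, hp _ (by omega), hp _ (by omega), sub_zero]

theorem coeff_derivative_one_sub_sq_mul (p : R[X]) (n : ℕ) :
    (derivative ((1 - X ^ 2) * p)).coeff (n + 1) = (n + 2) * (p.coeff (n + 2) - p.coeff n) := by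
  rw [coeff_derivative, sub_mul, one_mul, coeff_sub, coeff_X_pow_mul]
  push_cast
  ring

end DegreeBounds

section GegenbauerInner

variable {α : ℝ}

theorem one_sub_sq_pos {x : ℝ} (hx : x ∈ Ioo (-1 : ℝ) 1) : 0 < 1 - x ^ 2 := by
  nlinarith [hx.1, hx.2]

theorem integrableOn_one_sub_sq_rpow {β : ℝ} (hβ : -1 < β) :
    IntegrableOn (fun x : ℝ => (1 - x ^ 2) ^ β) (Ioo (-1) 1) := by
  have hright : IntervalIntegrable (fun x : ℝ => (1 - x ^ 2) ^ β) volume 0 1 := by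
    have hsing : IntervalIntegrable (fun x : ℝ => (1 - x) ^ β) volume 0 1 := by
      simpa using (intervalIntegral.intervalIntegrable_rpow' hβ (a := 1) (b := 0)).comp_sub_left 1
    have hreg : ContinuousOn (fun x : ℝ => (1 + x) ^ β) (uIcc 0 1) := by
      rw [uIcc_of_le zero_le_one]
      exact ContinuousOn.rpow_const (by fun_prop) fun x hx => Or.inl (by linarith [hx.1])
    refine (hsing.mul_continuousOn hreg).congr fun x hx => ?_
    rw [uIoc_of_le zero_le_one] at hx
    rw [← mul_rpow (by linarith [hx.2]) (by linarith [hx.1])]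
    ring_nf
  have hleft : IntervalIntegrable (fun x : ℝ => (1 - x ^ 2) ^ β) volume (-1) 0 := by
    simpa using (hright.comp_sub_left 0).symm
  exact (intervalIntegrable_iff_integrableOn_Ioo_of_le (by norm_num)).1 (hleft.trans hright)

theorem integrableOn_gegInner (hα : -1 / 2 < α) (f g : ℝ[X]) :
    IntegrableOn (fun x => f.eval x * g.eval x * (1 - x ^ 2) ^ (α - 1 / 2)) (Ioo (-1) 1) :=
  (integrableOn_one_sub_sq_rpow (by linarith)).continuousOn_mul_of_subset
    (by fun_prop) isCompact_Icc measurableSet_Ioo Ioo_subset_Icc_self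

/-- The Gegenbauer inner product as a bilinear form. -/
noncomputable def gegForm (α : ℝ) (hα : -1 / 2 < α) : LinearMap.BilinForm ℝ ℝ[X] :=
  LinearMap.mk₂ ℝ (gegInner α)
    (fun f g h => by
      simp only [gegInner, eval_add, add_mul]
      exact integral_add (integrableOn_gegInner hα f h) (integrableOn_gegInner hα g h))
    (fun c f g => by
      simp only [gegInner, eval_smul, smul_eq_mul, mul_assoc]
      exact integral_const_mul _ _)
    (fun f g h => by
      simp only [gegInner, eval_add, mul_add, add_mul]
      exact integral_add (integrableOn_gegInner hα f g) (integrableOn_gegInner hα f h))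
    (fun c f g => by
      simp only [gegInner, eval_smul, smul_eq_mul, mul_assoc, mul_left_comm _ c]
      exact integral_const_mul _ _)

theorem gegInner_comm (f g : ℝ[X]) : gegInner α f g = gegInner α g f := by
  simp only [gegInner, mul_comm (f.eval _)]

theorem gegInner_mul_left (f g h : ℝ[X]) : gegInner α (f * g) h = gegInner α f (g * h) := by
  simp only [gegInner, eval_mul, mul_assoc]

theorem gegInner_comp_neg_X (f g : ℝ[X]) :
    gegInner α (f.comp (-X)) (g.comp (-X)) = gegInner α f g := by
  have hneg := intervalIntegral.integral_comp_neg (a := -1) (b := 1)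
    fun x => f.eval x * g.eval x * (1 - x ^ 2) ^ (α - 1 / 2)
  simp only [gegInner, ← integral_Ioc_eq_integral_Ioo,
    ← intervalIntegral.integral_of_le (show (-1 : ℝ) ≤ 1 by norm_num)]
  simpa using hneg

theorem gegInner_pos (hα : -1 / 2 < α) {f g : ℝ[X]} (hfg : f * g ≠ 0)
    (h : ∀ x ∈ Ioo (-1 : ℝ) 1, 0 ≤ f.eval x * g.eval x) : 0 < gegInner α f g := by
  have hnonneg : ∀ x ∈ Ioo (-1 : ℝ) 1,
      0 ≤ f.eval x * g.eval x * (1 - x ^ 2) ^ (α - 1 / 2) := fun x hx =>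
    mul_nonneg (h x hx) (rpow_nonneg (one_sub_sq_pos hx).le _)
  rw [gegInner, setIntegral_pos_iff_support_of_nonneg_ae
    (ae_restrict_of_forall_mem measurableSet_Ioo hnonneg) (integrableOn_gegInner hα f g)]
  have hsupport : Ioo (-1 : ℝ) 1 \ (f * g).roots.toFinset ⊆
      Function.support (fun x => f.eval x * g.eval x * (1 - x ^ 2) ^ (α - 1 / 2)) ∩ Ioo (-1) 1 := by
    rintro x ⟨hx, hroot⟩
    have hx0 : f.eval x * g.eval x ≠ 0 := by simpa [hfg] using hroot
    exact ⟨mul_ne_zero hx0 (rpow_pos_of_pos (one_sub_sq_pos hx) _).ne', hx⟩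
  refine lt_of_lt_of_le ?_ (measure_mono hsupport)
  rw [measure_sdiff_null ((f * g).roots.toFinset.finite_toSet.measure_zero volume)]
  simp

theorem gegInner_self_pos (hα : -1 / 2 < α) {f : ℝ[X]} (hf : f ≠ 0) : 0 < gegInner α f f :=
  gegInner_pos hα (mul_ne_zero hf hf) fun _ _ => mul_self_nonneg _

theorem gegForm_anisotropic (hα : -1 / 2 < α) (f : ℝ[X]) (h : gegForm α hα f f = 0) : f = 0 :=
  by_contra fun hf => (gegInner_self_pos hα hf).ne' h

end GegenbauerInner

section GegenbauerOperator

variable {α : ℝ}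

/-- The weighted derivative `g ↦ w⁻¹ ((1 - x²) w g)'` for the Gegenbauer weight
`w = (1 - x²)^(α - 1/2)`; up to sign it is the adjoint of `f ↦ (1 - x²) f'`. -/
noncomputable def gegDivergence (α : ℝ) (g : ℝ[X]) : ℝ[X] :=
  (1 - X ^ 2) * derivative g - C (2 * α + 1) * X * g

/-- The second-order differential operator of which the Gegenbauer polynomials are
eigenfunctions. -/
noncomputable def gegOperator (α : ℝ) (f : ℝ[X]) : ℝ[X] :=
  gegDivergence α (derivative f)

theorem hasDerivAt_eval_mul_one_sub_sq_rpow (g : ℝ[X]) {x : ℝ} (hx : x ∈ Ioo (-1 : ℝ) 1) :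
    HasDerivAt (fun y => g.eval y * (1 - y ^ 2) ^ (α + 1 / 2))
      ((gegDivergence α g).eval x * (1 - x ^ 2) ^ (α - 1 / 2)) x := by
  have hpos := one_sub_sq_pos hx
  have hbase : HasDerivAt (fun y : ℝ => 1 - y ^ 2) (-(2 * x)) x := by
    simpa using (hasDerivAt_pow 2 x).const_sub 1
  refine ((g.hasDerivAt x).mul
    (hbase.rpow_const (p := α + 1 / 2) (Or.inl hpos.ne'))).congr_deriv ?_
  rw [show α + 1 / 2 = α - 1 / 2 + 1 by ring, rpow_add_one hpos.ne', add_sub_cancel_right]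
  simp only [gegDivergence, eval_sub, eval_mul, eval_C, eval_X, eval_one, eval_pow]
  ring

theorem gegInner_one_gegDivergence (hα : -1 / 2 < α) (g : ℝ[X]) :
    gegInner α 1 (gegDivergence α g) = 0 := by
  have hexp : 0 < α + 1 / 2 := by linarith
  have hcont : ContinuousOn (fun y : ℝ => g.eval y * (1 - y ^ 2) ^ (α + 1 / 2)) (Icc (-1) 1) :=
    g.continuousOn.mul (ContinuousOn.rpow_const (by fun_prop) fun _ _ => Or.inr hexp.le)
  have hint := integrableOn_gegInner hα 1 (gegDivergence α g)
  simp only [eval_one, one_mul] at hint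
  have hle : (-1 : ℝ) ≤ 1 := by norm_num
  have hftc := intervalIntegral.integral_eq_sub_of_hasDerivAt_of_le hle hcont
    (fun x hx => hasDerivAt_eval_mul_one_sub_sq_rpow g hx)
    ((intervalIntegrable_iff_integrableOn_Ioo_of_le hle).2 hint)
  rw [intervalIntegral.integral_of_le hle, integral_Ioc_eq_integral_Ioo] at hftc
  norm_num only [zero_rpow hexp.ne', mul_zero, sub_self] at hftc
  simpa only [gegInner, eval_one, one_mul] using hftc

theorem gegInner_gegDivergence_right (hα : -1 / 2 < α) (f g : ℝ[X]) :
    gegInner α f (gegDivergence α g) = -gegInner α ((1 - X ^ 2) * derivative f) g := by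
  have hleibniz : gegDivergence α (f * g) =
      f * gegDivergence α g + (1 - X ^ 2) * derivative f * g := by
    simp only [gegDivergence, derivative_mul]
    ring
  have hzero := gegInner_one_gegDivergence hα (f * g)
  rw [hleibniz] at hzero
  have hadd := (gegForm α hα 1).map_add (f * gegDivergence α g) ((1 - X ^ 2) * derivative f * g)
  simp only [gegForm, LinearMap.mk₂_apply, hzero, ← gegInner_mul_left, one_mul] at hadd
  linarith

theorem gegInner_gegOperator_comm (hα : -1 / 2 < α) (f g : ℝ[X]) :
    gegInner α (gegOperator α f) g = gegInner α f (gegOperator α g) := by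
  rw [gegInner_comm, gegOperator, gegOperator, gegInner_gegDivergence_right hα,
    gegInner_gegDivergence_right hα, gegInner_comm, ← gegInner_mul_left, mul_comm (derivative f)]

theorem coeff_gegOperator (f : ℝ[X]) (i : ℕ) :
    (gegOperator α f).coeff i =
      (i + 2) * (i + 1) * f.coeff (i + 2) - i * (i + 2 * α) * f.coeff i := by
  rw [gegOperator, gegDivergence, sub_mul, one_mul, mul_assoc]
  simp only [coeff_sub, coeff_C_mul]
  rcases i with _ | _ | i <;> simp [coeff_derivative, coeff_X_pow_mul'] <;> ring

theorem degree_gegOperator_lt {f : ℝ[X]} {n : ℕ} (hf : f.degree < n) :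
    (gegOperator α f).degree < n := by
  rw [degree_lt_iff_coeff_zero] at hf ⊢
  intro i hi
  rw [coeff_gegOperator, hf i hi, hf (i + 2) (by omega), mul_zero, mul_zero, sub_zero]

end GegenbauerOperator

section MonicGegenbauer

variable {α : ℝ} {n : ℕ} {P : ℝ[X]}

theorem exists_isMonicGegenbauer (hα : -1 / 2 < α) (n : ℕ) : ∃ P, IsMonicGegenbauer α n P :=
  exists_isMonicOrthogonal (gegForm_anisotropic hα) n

theorem IsMonicGegenbauer.isMonicOrthogonal (hα : -1 / 2 < α) (hP : IsMonicGegenbauer α n P) :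
    IsMonicOrthogonal (gegForm α hα) n P := hP

theorem IsMonicGegenbauer.coeff_eq_zero (hα : -1 / 2 < α) (hP : IsMonicGegenbauer α (n + 1) P) :
    P.coeff n = 0 :=
  (hP.isMonicOrthogonal hα).coeff_eq_zero (gegForm_anisotropic hα) gegInner_comp_neg_X

theorem IsMonicGegenbauer.gegOperator_eq (hα : -1 / 2 < α) (hP : IsMonicGegenbauer α n P) :
    gegOperator α P = -(n * (n + 2 * α)) • P := by
  have hP' := hP.isMonicOrthogonal hα
  have hPtop := (degree_lt_iff_coeff_zero _ _).1 hP'.degree_lt_succ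
  have hcoeff : (gegOperator α P).coeff n = -(n * (n + 2 * α)) := by
    rw [coeff_gegOperator, hPtop (n + 2) (by omega), hP'.coeff_self]
    ring
  rw [← hcoeff]
  refine hP'.eq_coeff_smul (gegForm_anisotropic hα) (degree_gegOperator_lt hP'.degree_lt_succ)
    fun q hq => ?_
  exact (gegInner_gegOperator_comm hα P q).trans (hP'.apply_eq_zero (degree_gegOperator_lt hq))

theorem IsMonicGegenbauer.eval_pos (hα : -1 / 2 < α) (hP : IsMonicGegenbauer α n P) {x : ℝ}
    (hx : 1 ≤ x) : 0 < P.eval x := by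
  obtain ⟨hmonic, hdeg, horth⟩ := hP
  refine zero_lt_eval_of_roots_lt_of_leadingCoeff_nonneg (fun y hy => ?_) (by simp [hmonic])
  by_contra! hxy
  obtain ⟨q, rfl⟩ := dvd_iff_isRoot.2 hy
  have hq : q ≠ 0 := right_ne_zero_of_mul hmonic.ne_zero
  have hqdeg : q.degree < n := by
    rw [← natDegree_lt_iff_degree_lt hq, ← hdeg, natDegree_mul (X_sub_C_ne_zero y) hq,
      natDegree_X_sub_C]
    omega
  have hpos : 0 < gegInner α (-((X - C y) * q)) q := by
    refine gegInner_pos hα (mul_ne_zero (neg_ne_zero.2 hmonic.ne_zero) hq) fun t ht => ?_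
    simp only [eval_neg, eval_mul, eval_sub, eval_X, eval_C]
    nlinarith [mul_nonneg (show 0 ≤ y - t by linarith [ht.2]) (mul_self_nonneg (q.eval t))]
  have hneg := (gegForm α hα).neg_left ((X - C y) * q) q
  simp only [gegForm, LinearMap.mk₂_apply, horth q hqdeg, neg_zero] at hneg
  exact hpos.ne' hneg

/-- For the Gegenbauer polynomial `P` of degree `n`, this is an explicit antiderivative of a
multiple of `P`, with the constant of integration chosen to make it orthogonal to all
polynomials of degree less than `n - 1`. -/
noncomputable def gegPrimitive (α : ℝ) (P : ℝ[X]) : ℝ[X] :=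
  C (2 * α - 1) * X * P - (1 - X ^ 2) * derivative P

theorem eval_one_gegPrimitive (α : ℝ) (P : ℝ[X]) :
    (gegPrimitive α P).eval 1 = (2 * α - 1) * P.eval 1 := by
  simp [gegPrimitive]

theorem derivative_gegPrimitive (α : ℝ) (P : ℝ[X]) :
    derivative (gegPrimitive α P) = C (2 * α - 1) * P - gegOperator α P := by
  simp only [gegPrimitive, gegOperator, gegDivergence, derivative_sub, derivative_mul,
    derivative_C, derivative_X, derivative_one, derivative_X_sq]
  simp only [C_sub, C_add, C_mul, C_1, map_ofNat]
  ring

theorem IsMonicGegenbauer.derivative_gegPrimitive (hα : -1 / 2 < α)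
    (hP : IsMonicGegenbauer α n P) :
    derivative (gegPrimitive α P) = ((n + 1) * (n + 2 * α - 1)) • P := by
  rw [_root_.derivative_gegPrimitive, hP.gegOperator_eq hα, ← smul_eq_C_mul, ← sub_smul]
  ring_nf

theorem gegInner_gegPrimitive (hα : -1 / 2 < α) (P p : ℝ[X]) :
    gegInner α (gegPrimitive α P) p = gegInner α P (derivative ((1 - X ^ 2) * p)) := by
  have hsplit : derivative ((1 - X ^ 2) * p) = gegDivergence α p + C (2 * α - 1) * X * p := by
    simp only [gegDivergence, derivative_mul, derivative_sub, derivative_one, derivative_X_sq]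
    simp only [C_sub, C_add, C_mul, C_1, map_ofNat]
    ring
  have hadd := (gegForm α hα P).map_add (gegDivergence α p) (C (2 * α - 1) * X * p)
  have hsub := (gegForm α hα).sub_left (C (2 * α - 1) * X * P) ((1 - X ^ 2) * derivative P) p
  simp only [gegForm, LinearMap.mk₂_apply, ← gegInner_mul_left, mul_comm P] at hadd hsub
  rw [hsplit, gegPrimitive, hadd, hsub, gegInner_gegDivergence_right hα]
  ring

end MonicGegenbauer

section GegenbauerSobolev

variable {α lam : ℝ} {n : ℕ} {P Q S p : ℝ[X]}

/-- The Gegenbauer–Sobolev inner product as a bilinear form. -/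
noncomputable def sobForm (α lam : ℝ) (hα : -1 / 2 < α) : LinearMap.BilinForm ℝ ℝ[X] :=
  gegForm α hα + lam • (gegForm α hα).compl₁₂ derivative derivative

theorem sobInner_self_pos (hα : -1 / 2 < α) (hlam : 0 ≤ lam) (hp : p ≠ 0) :
    0 < sobInner α lam p p := by
  have hderiv : 0 ≤ gegInner α (derivative p) (derivative p) :=
    setIntegral_nonneg measurableSet_Ioo fun x hx =>
      mul_nonneg (mul_self_nonneg _) (rpow_nonneg (one_sub_sq_pos hx).le _)
  exact add_pos_of_pos_of_nonneg (gegInner_self_pos hα hp) (mul_nonneg hlam hderiv)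

theorem sobForm_anisotropic (hα : -1 / 2 < α) (hlam : 0 ≤ lam) (f : ℝ[X])
    (h : sobForm α lam hα f f = 0) : f = 0 :=
  by_contra fun hf => (sobInner_self_pos hα hlam hf).ne' h

theorem sobInner_comp_neg_X (f g : ℝ[X]) :
    sobInner α lam (f.comp (-X)) (g.comp (-X)) = sobInner α lam f g := by
  have hderiv (h : ℝ[X]) : derivative (h.comp (-X)) = (-derivative h).comp (-X) := by
    simp [derivative_comp]
  have hneg : gegInner α (-derivative f) (-derivative g) =
      gegInner α (derivative f) (derivative g) := by
    simp [gegInner]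
  rw [sobInner, hderiv, hderiv, gegInner_comp_neg_X, gegInner_comp_neg_X, hneg, sobInner]

theorem exists_isMonicGegSobolev (hα : -1 / 2 < α) (hlam : 0 ≤ lam) (n : ℕ) :
    ∃ Q, IsMonicGegSobolev α lam n Q :=
  exists_isMonicOrthogonal (sobForm_anisotropic hα hlam) n

theorem IsMonicGegSobolev.isMonicOrthogonal (hα : -1 / 2 < α) (hQ : IsMonicGegSobolev α lam n Q) :
    IsMonicOrthogonal (sobForm α lam hα) n Q := hQ

theorem IsMonicGegSobolev.coeff_eq_zero (hα : -1 / 2 < α) (hlam : 0 ≤ lam)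
    (hQ : IsMonicGegSobolev α lam (n + 1) Q) : Q.coeff n = 0 :=
  (hQ.isMonicOrthogonal hα).coeff_eq_zero (sobForm_anisotropic hα hlam) sobInner_comp_neg_X

theorem IsMonicGegenbauer.sobInner_gegPrimitive (hα : -1 / 2 < α)
    (hP : IsMonicGegenbauer α (n + 1) P) (hp : p.degree < (n + 1 : ℕ)) :
    sobInner α lam (gegPrimitive α P) p = -((n + 2) * p.coeff n * gegInner α P P) := by
  have hP' := hP.isMonicOrthogonal hα
  have hzero : gegInner α (derivative (gegPrimitive α P)) (derivative p) = 0 := by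
    have hPp : gegForm α hα P (derivative p) = 0 :=
      hP'.apply_eq_zero (degree_derivative_le.trans_lt hp)
    change gegForm α hα _ _ = 0
    rw [hP.derivative_gegPrimitive hα, LinearMap.BilinForm.smul_left, hPp, mul_zero]
  have htop : gegInner α P (derivative ((1 - X ^ 2) * p)) =
      (derivative ((1 - X ^ 2) * p)).coeff (n + 1) * gegInner α P P :=
    hP'.apply_eq_coeff_mul (degree_derivative_one_sub_sq_mul_lt hp)
  rw [sobInner, hzero, mul_zero, add_zero, gegInner_gegPrimitive hα, htop,
    coeff_derivative_one_sub_sq_mul, (degree_lt_iff_coeff_zero _ _).1 hp (n + 2) (by omega)]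
  ring

theorem degree_smul_sub_gegPrimitive_lt (hα : -1 / 2 < α) (hlam : 0 ≤ lam)
    (hQ : IsMonicGegSobolev α lam (n + 2) Q) (hP : IsMonicGegenbauer α (n + 1) P) :
    ((n + 2 * α) • Q - gegPrimitive α P).degree < (n + 1 : ℕ) := by
  apply degree_lt_succ_of_degree_derivative_lt
  have hderiv : derivative ((n + 2 * α) • Q - gegPrimitive α P) =
      (n + 2 * α) • (derivative Q - (n + 2 : ℝ) • P) := by
    rw [derivative_sub, derivative_smul, hP.derivative_gegPrimitive hα, smul_sub, smul_smul]
    push_cast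
    ring_nf
  have hQ' := hQ.isMonicOrthogonal hα
  have hP' := hP.isMonicOrthogonal hα
  have hQtop := (degree_lt_iff_coeff_zero _ _).1 hQ'.degree_lt_succ
  have hPtop := (degree_lt_iff_coeff_zero _ _).1 hP'.degree_lt_succ
  rw [hderiv]
  refine (degree_smul_le _ _).trans_lt ((degree_lt_iff_coeff_zero _ _).2 fun i hi => ?_)
  rw [coeff_sub, coeff_derivative, coeff_smul, smul_eq_mul]
  obtain rfl | rfl | hi : i = n ∨ i = n + 1 ∨ n + 2 ≤ i := by omega
  · rw [hQ.coeff_eq_zero hα hlam, hP.coeff_eq_zero hα]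
    ring
  · rw [hQ'.coeff_self, hP'.coeff_self]
    push_cast
    ring
  · rw [hQtop (i + 1) (by omega), hPtop i hi]
    ring

theorem exists_smul_eq_gegPrimitive_add_smul (hα : -1 / 2 < α) (hlam : 0 ≤ lam)
    (hQ : IsMonicGegSobolev α lam (n + 2) Q) (hP : IsMonicGegenbauer α (n + 1) P)
    (hS : IsMonicGegSobolev α lam n S) :
    ∃ b : ℝ, 0 < b ∧ (n + 2 * α) • Q = gegPrimitive α P + b • S := by
  have hQ' := hQ.isMonicOrthogonal hα
  have hS' := hS.isMonicOrthogonal hα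
  set D := (n + 2 * α) • Q - gegPrimitive α P with hD
  have hDinner (p : ℝ[X]) (hp : p.degree < (n + 1 : ℕ)) :
      sobForm α lam hα D p = (n + 2) * p.coeff n * gegInner α P P := by
    have hQp : sobForm α lam hα Q p = 0 :=
      hQ'.apply_eq_zero (hp.trans (by exact_mod_cast (n + 1).lt_succ_self))
    have hPp : sobForm α lam hα (gegPrimitive α P) p = _ := hP.sobInner_gegPrimitive hα hp
    rw [hD, LinearMap.BilinForm.sub_left, LinearMap.BilinForm.smul_left, hQp, hPp]
    ring
  have hDS : D = D.coeff n • S := by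
    refine hS'.eq_coeff_smul (sobForm_anisotropic hα hlam)
      (degree_smul_sub_gegPrimitive_lt hα hlam hQ hP) fun q hq => ?_
    rw [hDinner q (hq.trans (by exact_mod_cast n.lt_succ_self)),
      (degree_lt_iff_coeff_zero _ _).1 hq n le_rfl]
    ring
  refine ⟨D.coeff n, ?_, by rw [← hDS, hD]; ring⟩
  have hproduct : D.coeff n * sobInner α lam S S = (n + 2) * gegInner α P P := by
    have hDSinner := hDinner S hS'.degree_lt_succ
    rwa [hDS, LinearMap.BilinForm.smul_left, hS'.coeff_self, mul_one] at hDSinner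
  have hPP := gegInner_self_pos hα hP.1.ne_zero
  exact pos_of_mul_pos_left (hproduct ▸ by positivity)
    (sobInner_self_pos hα hlam hS.1.ne_zero).le

end GegenbauerSobolev

/-- For `α ≥ 1/2` the monic Gegenbauer–Sobolev polynomial is positive at `1`. -/
theorem gegSobolev_pos_at_one (α lam : ℝ) (hα : 1/2 ≤ α) (hlam : 0 ≤ lam) (n : ℕ)
    (Q : Polynomial ℝ) (hQ : IsMonicGegSobolev α lam n Q) :
    0 < Q.eval 1 := by
  have hα' : -1 / 2 < α := by linarith
  induction n using Nat.twoStepInduction generalizing Q with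
  | zero => simp [hQ.1.natDegree_eq_zero.1 hQ.2.1]
  | one =>
    rw [hQ.1.eq_X_add_C hQ.2.1, hQ.coeff_eq_zero hα' hlam]
    simp
  | more n ih _ =>
    obtain ⟨P, hP⟩ := exists_isMonicGegenbauer hα' (n + 1)
    obtain ⟨S, hS⟩ := exists_isMonicGegSobolev hα' hlam n
    obtain ⟨b, hb, hrec⟩ := exists_smul_eq_gegPrimitive_add_smul hα' hlam hQ hP hS
    have hP1 : 0 < P.eval 1 := hP.eval_pos hα' le_rfl
    have hS1 : 0 < S.eval 1 := ih S hS
    have hQ1 : (n + 2 * α) * Q.eval 1 = (2 * α - 1) * P.eval 1 + b * S.eval 1 := by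
      simpa [eval_one_gegPrimitive] using congrArg (eval 1) hrec
    have hprim : 0 ≤ (2 * α - 1) * P.eval 1 := mul_nonneg (by linarith) hP1.le
    have hcoef : (0 : ℝ) ≤ n + 2 * α := by positivity
    exact pos_of_mul_pos_right (hQ1 ▸ by positivity) hcoef
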